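/- arXiv:2401.01135 — 2 statements merged into one kernel-verified Lean document; each statement's English description precedes it below -/
import Mathlib

section
/- Let q be a prime power and m = 2r with r ≥ 2. The augmented code \overline{C_D} is an F_q-linear code of length q^{r−1}(q^r − q + 1), dimension m + 1, and minimum distance q^{r−1}(q^r − q^{r−1} − q + 1). Moreover, the multiset of Hamming weights of its codewords consists of: weight 0 with multiplicity 1; weight q^{r−1}(q^r − q^{r−1} − q + 1) with multiplicity q^{r−1}(2q^{r+1} − 2q^r − q² + 3q − 2) − q + 1; weight q^{r−1}(q^r − q^{r−1} − q + 2) with multiplicity q^{r−1}(q − 1)(q^{r+1} − q^r + q − 1); weight q^{2r−2}(q − 1) with multiplicity q^{r−1}(q^r − q + 1) − 1; and weight q^{r−1}(q^r − q + 1) with multiplicity q − 1. -/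
open scoped Classical

noncomputable section

/-- The augmented code `\overline{C_D}` of the defining set `D = {x : K // P x}`:
codewords are `(Tr_{K/F}(b d) + c)_{d ∈ D}` for `b ∈ K`, `c ∈ F`. -/
def augCode (F K : Type*) [Field F] [Field K] [Algebra F K] (P : K → Prop) :
    Set ({x : K // P x} → F) :=
  {w | ∃ b : K, ∃ c : F, ∀ d : {x : K // P x}, w d = Algebra.trace F K (b * d.1) + c}

/-- `d` is the minimum distance of the code `C`: the smallest Hamming weight of a
nonzero codeword. -/
def IsMinDist {ι F : Type*} [Fintype ι] [CommRing F] (C : Set (ι → F)) (d : ℕ) : Prop :=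
  (∃ c ∈ C, c ≠ 0 ∧ hammingNorm c = d) ∧ ∀ c ∈ C, c ≠ 0 → d ≤ hammingNorm c

/-!
The elements `x ^ (q ^ r + 1)` are the norms `N x` of `F_{q^m} / F_{q^r}`, so the defining set is
the quadric `Q = 0` of `Q x = Tr (N x)`. This is a nondegenerate quadratic form of elliptic type,
because the norm is `(q ^ r + 1)`-to-one and the trace `q ^ (r - 1)`-to-one away from zero, and
every linear functional is `polar Q · y` for some `y`. So the weights of the code are read off from
the sizes of the affine hyperplane sections of an elliptic quadric.

No character sums are needed. On the line through `x` in direction `y` one has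
`Q (x + s y) = Q x + s polar Q x y + s² Q y`, so counting the pairs `(x, s)` with
`Q x + s polar Q x y = 0`, first for fixed `s` and then for fixed `x`, expresses the number of
isotropic `x` with `polar Q x y ≠ 0` through the fibre sizes of `Q`. Scaling `x` shows that all
nonzero values of `polar Q · y` are taken equally often on the quadric, so the weight of `(y, c)`
depends only on whether `y = 0`, `Q y = 0` and `c = 0`.
-/

section Counting

open Finset

@[to_additive card_mul_card_fiber_addMonoidHom]
theorem card_mul_card_fiber_monoidHom {G H : Type*} [Group G] [Group H] [Fintype G]
    [Fintype H] [DecidableEq H] {f : G →* H} (hf : Function.Surjective f) (c : H) :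
    Fintype.card H * #{x | f x = c} = Fintype.card G := by
  calc Fintype.card H * #{x | f x = c}
      = ∑ d : H, #{x | f x = d} := by
        simp only [MonoidHom.card_fiber_eq_of_mem_range f (hf _) (hf c), sum_const, card_univ,
          smul_eq_mul]
    _ = Fintype.card G :=
        (card_eq_sum_card_fiberwise fun x _ ↦ mem_coe.2 (mem_univ (f x))).symm

theorem hammingNorm_restrict {α R : Type*} [Fintype α] [Zero R] (P : α → Prop) (f : α → R) :
    hammingNorm (fun d : {x // P x} ↦ f d) = #{x | P x ∧ f x ≠ 0} := by
  rw [hammingNorm, ← filter_filter, ← card_map (Function.Embedding.subtype P)]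
  congr 1
  ext x
  simp [and_comm]

theorem univ_val_eq_singleton_add {α : Type*} [Fintype α] {P : α → Prop} {a : α} (ha : P a) :
    (univ : Finset α).val
      = {a} + (({x | P x} : Finset α).erase a).val + ({x | ¬P x} : Finset α).val := by
  rw [erase_val, Multiset.singleton_add, Multiset.cons_erase (mem_filter_univ _ |>.2 ha)]
  exact (Multiset.filter_add_not P _).symm

theorem map_product_eq_replicate {α β γ : Type*} {s : Finset α} {t : Finset β} {f : α × β → γ}
    {w : γ} (h : ∀ a ∈ s, ∀ b ∈ t, f (a, b) = w) :
    (s.val ×ˢ t.val).map f = Multiset.replicate (#s * #t) w := by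
  rw [Multiset.map_congr rfl fun z hz ↦ h z.1 (Multiset.mem_product.1 hz).1 z.2
    (Multiset.mem_product.1 hz).2, Multiset.map_const', Multiset.card_product, card_val, card_val]

theorem map_toFinset_val_eq {α β γ : Type*} [Fintype α] {f : α → β} (hf : Function.Injective f)
    {C : Set β} [Fintype C] (hC : C = Set.range f) (g : β → γ) :
    C.toFinset.val.map g = (univ : Finset α).val.map fun a ↦ g (f a) := by
  have hmap : C.toFinset = univ.map ⟨f, hf⟩ := by
    ext
    simp [hC]
  rw [hmap, map_val, Multiset.map_map]
  rfl

end Counting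

section Arithmetic

variable {q n : ℕ}

theorem pow_succ_sub_pow_sub_add_one (hq : 1 < q) (hn : n ≠ 0) :
    q ^ (n + 1) - q ^ n - q + 1 = (q - 1) * (q ^ n - 1) := by
  have hadd : q ^ n + q ≤ q ^ n * q := Nat.add_le_mul (Nat.one_lt_pow hn hq) hq
  rw [pow_succ, Nat.sub_sub]
  zify [hadd, hq.le, Nat.one_le_pow n q hq.pos]
  ring

theorem pow_mul_sub_one_mul_pow_sub (hq : 1 < q) :
    q ^ n * (q - 1) * (q ^ (n + 2) - q ^ (n + 1) + q - 1)
      = (q - 1) * (q ^ n * (q ^ (n + 1) + 1)) * (q - 1) := by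
  have hpow : q ^ (n + 1) ≤ q ^ (n + 2) := Nat.pow_le_pow_right hq.le (Nat.le_succ _)
  have hfactor : q ^ (n + 2) - q ^ (n + 1) + q - 1 = (q ^ (n + 1) + 1) * (q - 1) := by
    rw [Nat.add_sub_assoc hq.le]
    zify [hpow, hq.le]
    ring
  rw [hfactor]
  ring

theorem pow_mul_two_mul_pow_sub (hq : 1 < q) :
    q ^ n * (2 * q ^ (n + 2) - 2 * q ^ (n + 1) - q ^ 2 + 3 * q - 2) - q + 1
      = (q ^ n * (q ^ (n + 1) - q + 1) - 1) * (q - 1)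
        + (q - 1) * (q ^ n * (q ^ (n + 1) + 1)) := by
  have hqq : q ≤ q ^ (n + 1) := Nat.le_self_pow n.succ_ne_zero q
  have hpos : 1 ≤ q ^ n := Nat.one_le_pow n q hq.pos
  have hle : 2 * q ^ (n + 1) + q ^ 2 ≤ 2 * q ^ (n + 2) := by
    rw [pow_succ q (n + 1), sq]
    nlinarith
  have hfactor : 2 * q ^ (n + 2) - 2 * q ^ (n + 1) - q ^ 2 + 3 * q - 2
      = (q - 1) * (q ^ (n + 1) - q + 1 + (q ^ (n + 1) + 1)) := by
    rw [Nat.sub_sub, Nat.add_sub_assoc (by lia)]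
    zify [hle, hq.le, hqq, show 2 ≤ 3 * q by lia]
    ring
  have hsub : q ≤ q ^ n * ((q - 1) * (q ^ (n + 1) - q + 1 + (q ^ (n + 1) + 1))) := by
    calc q ≤ 1 * (1 * (q ^ (n + 1) + 1)) := by lia
      _ ≤ _ := Nat.mul_le_mul hpos
        (Nat.mul_le_mul (Nat.sub_pos_of_lt hq) (Nat.le_add_left _ _))
  have hcard : 1 ≤ q ^ n * (q ^ (n + 1) - q + 1) := Nat.mul_pos hpos (Nat.succ_pos _)
  rw [hfactor]
  zify [hsub, hcard, hq.le, hqq]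
  ring

end Arithmetic

section QuadraticForm

open Finset QuadraticMap

variable {F V : Type*} [Field F] [AddCommGroup V] [Module F V]

/-- The encoder of the affine functionals on the quadric `Q = 0`: since `polar Q` is nondegenerate
for the forms of interest, these are the functions `d ↦ polar Q d y + c`. -/
def quadricEncoder (Q : QuadraticForm F V) : V × F →ₗ[F] ({x : V // Q x = 0} → F) :=
  LinearMap.pi fun d ↦ Q.polarBilin d ∘ₗ LinearMap.fst F V F + LinearMap.snd F V F

theorem quadricEncoder_apply (Q : QuadraticForm F V) (y : V) (c : F) (d : {x : V // Q x = 0}) :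
    quadricEncoder Q (y, c) d = polar Q d y + c := rfl

variable [Fintype V]

theorem hammingNorm_quadricEncoder (Q : QuadraticForm F V) (y : V) (c : F) :
    hammingNorm (quadricEncoder Q (y, c)) = #{x | Q x = 0 ∧ polar Q x y + c ≠ 0} :=
  hammingNorm_restrict (fun x ↦ Q x = 0) fun x ↦ polar Q x y + c

theorem hammingNorm_quadricEncoder_zero_right (Q : QuadraticForm F V) (y : V) :
    hammingNorm (quadricEncoder Q (y, 0)) = #{x | Q x = 0 ∧ polar Q x y ≠ 0} := by
  simp only [hammingNorm_quadricEncoder, add_zero]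

theorem hammingNorm_quadricEncoder_zero_left (Q : QuadraticForm F V) {c : F} (hc : c ≠ 0) :
    hammingNorm (quadricEncoder Q (0, c)) = #{x | Q x = 0} := by
  simp [hammingNorm_quadricEncoder, hc]

theorem hammingNorm_quadricEncoder_add_card (Q : QuadraticForm F V) (y : V) (c : F) :
    hammingNorm (quadricEncoder Q (y, c)) + #{x | Q x = 0 ∧ polar Q x y = -c}
      = #{x | Q x = 0} := by
  rw [hammingNorm_quadricEncoder, add_comm]
  simp only [← filter_filter _ _ univ, ← eq_neg_iff_add_eq_zero, ne_eq]
  exact card_filter_add_card_filter_not _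

variable [Fintype F]

theorem card_mul_card_linearMap_ne_zero {f : V →ₗ[F] F} (hf : f ≠ 0) :
    Fintype.card F * #{x | f x ≠ 0} = (Fintype.card F - 1) * Fintype.card V := by
  have hker : Fintype.card F * #{x | f x = 0} = Fintype.card V :=
    card_mul_card_fiber_addMonoidHom (f := f.toAddMonoidHom) (f.surjective hf) 0
  have hsplit : #{x | f x = 0} + #{x | f x ≠ 0} = Fintype.card V :=
    card_filter_add_card_filter_not (s := univ) _
  rw [Nat.sub_one_mul, ← hsplit, mul_add, hsplit, hker, Nat.add_sub_cancel_left]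

theorem card_sub_one_mul_card_isotropic_eq (Q : QuadraticForm F V) (f : V →ₗ[F] F) {c : F}
    (hc : c ≠ 0) :
    (Fintype.card F - 1) * #{x | Q x = 0 ∧ f x = c} = #{x | Q x = 0 ∧ f x ≠ 0} := by
  have hscale (d : F) (hd : d ≠ 0) :
      #{x | Q x = 0 ∧ f x = d} = #{x | Q x = 0 ∧ f x = c} := by
    have hcd : c / d ≠ 0 := div_ne_zero hc hd
    refine card_equiv (LinearEquiv.smulOfNeZero F V _ hcd).toEquiv fun x ↦ ?_
    have hf : c / d * f x = c ↔ f x = d := by field_simp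
    simp [Q.map_smul, hcd, hf]
  calc (Fintype.card F - 1) * #{x | Q x = 0 ∧ f x = c}
      = ∑ d ∈ univ.erase 0, #{x | Q x = 0 ∧ f x = d} := by
        rw [sum_congr rfl fun d hd ↦ hscale d (ne_of_mem_erase hd), sum_const,
          card_erase_of_mem (mem_univ _), card_univ, smul_eq_mul]
    _ = ∑ d ∈ univ.erase 0, #{x ∈ {x | Q x = 0} | f x = d} := by simp only [filter_filter]
    _ = #{x | Q x = 0 ∧ f x ≠ 0} := by
        rw [sum_card_fiberwise_eq_card_filter _ _ f, filter_filter]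
        simp only [mem_erase, mem_univ, and_true]

theorem card_mul_card_isotropic_polar_ne_zero_add_sum (Q : QuadraticForm F V) (y : V) :
    Fintype.card F * #{x | Q x = 0 ∧ polar Q x y ≠ 0} + ∑ s : F, #{x | Q x = s * s * Q y}
      = #{x | polar Q x y ≠ 0} + Fintype.card F * #{x | Q x = 0} := by
  have htranslate (s : F) : #{x | Q x = s * s * Q y} = #{x | Q x + s * polar Q x y = 0} := by
    refine (card_equiv (Equiv.addRight (s • y)) fun x ↦ ?_).symm
    simp only [mem_filter_univ, Equiv.coe_addRight, QuadraticMap.map_add Q, Q.map_smul,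
      polar_smul_right, smul_eq_mul, add_right_comm _ (s * s * Q y), add_eq_right]
  have hline (x : V) : #{s : F | Q x + s * polar Q x y = 0}
      + Fintype.card F * (if Q x = 0 ∧ polar Q x y ≠ 0 then 1 else 0)
      = (if polar Q x y ≠ 0 then 1 else 0) + Fintype.card F * (if Q x = 0 then 1 else 0) := by
    by_cases hp : polar Q x y = 0
    · by_cases hx : Q x = 0 <;> simp [hp, hx]
    · have hroot (s : F) : Q x + s * polar Q x y = 0 ↔ s = -Q x / polar Q x y := by
        rw [eq_div_iff hp, eq_neg_iff_add_eq_zero, add_comm]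
      have hone : #{s : F | s = -Q x / polar Q x y} = 1 :=
        card_eq_one.2 ⟨-Q x / polar Q x y, by ext s; simp⟩
      simp [hroot, hp, hone]
  calc Fintype.card F * #{x | Q x = 0 ∧ polar Q x y ≠ 0} + ∑ s : F, #{x | Q x = s * s * Q y}
      = ∑ x, (#{s : F | Q x + s * polar Q x y = 0}
          + Fintype.card F * (if Q x = 0 ∧ polar Q x y ≠ 0 then 1 else 0)) := by
        rw [sum_congr rfl fun s _ ↦ htranslate s, sum_add_distrib, ← mul_sum, ← card_filter,
          add_comm, add_left_inj]
        exact sum_card_bipartiteAbove_eq_sum_card_bipartiteBelow fun s x ↦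
          Q x + s * polar Q x y = 0
    _ = #{x | polar Q x y ≠ 0} + Fintype.card F * #{x | Q x = 0} := by
        rw [sum_congr rfl fun x _ ↦ hline x, sum_add_distrib, ← mul_sum, ← card_filter,
          ← card_filter]

/-- Nondegenerate quadratic forms of elliptic (minus) type of Witt index `n`, hence of dimension
`2 n + 2`, over the field with `q` elements. The type is encoded by the number of solutions of
`Q x = d` for `d ≠ 0`, which is `q ^ n * (q ^ (n + 1) - 1)` for forms of hyperbolic type. -/
structure IsEllipticForm (Q : QuadraticForm F V) (q n : ℕ) : Prop where
  card_field : Fintype.card F = q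
  card_space : Fintype.card V = q ^ (2 * n + 2)
  separatingRight : Q.polarBilin.SeparatingRight
  card_fiber : ∀ d ≠ 0, #{x | Q x = d} = q ^ n * (q ^ (n + 1) + 1)

namespace IsEllipticForm

variable {Q : QuadraticForm F V} {q n : ℕ} {y : V}

theorem one_lt (hQ : IsEllipticForm Q q n) : 1 < q := hQ.card_field ▸ Fintype.one_lt_card

theorem card_anisotropic (hQ : IsEllipticForm Q q n) :
    #{x | Q x ≠ 0} = (q - 1) * (q ^ n * (q ^ (n + 1) + 1)) := by
  calc #{x | Q x ≠ 0}
      = ∑ d ∈ univ.erase 0, #{x | Q x = d} := by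
        rw [sum_card_fiberwise_eq_card_filter _ _ Q]
        simp only [mem_erase, mem_univ, and_true]
    _ = (q - 1) * (q ^ n * (q ^ (n + 1) + 1)) := by
        rw [sum_congr rfl fun d hd ↦ hQ.card_fiber d (ne_of_mem_erase hd), sum_const,
          card_erase_of_mem (mem_univ _), card_univ, hQ.card_field, smul_eq_mul]

theorem card_isotropic_add (hQ : IsEllipticForm Q q n) :
    #{x | Q x = 0} + (q - 1) * (q ^ n * (q ^ (n + 1) + 1)) = q ^ (2 * n + 2) := by
  rw [← hQ.card_anisotropic, ← hQ.card_space]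
  exact card_filter_add_card_filter_not (s := univ) _

theorem card_isotropic (hQ : IsEllipticForm Q q n) :
    #{x | Q x = 0} = q ^ n * (q ^ (n + 1) - q + 1) := by
  have hadd := hQ.card_isotropic_add
  have hq : q ≤ q ^ (n + 1) := Nat.le_self_pow n.succ_ne_zero q
  zify [hq, hQ.one_lt.le] at hadd ⊢
  linear_combination hadd

theorem mul_card_polar_ne_zero (hQ : IsEllipticForm Q q n) (hy : y ≠ 0) :
    q * #{x | polar Q x y ≠ 0} = (q - 1) * q ^ (2 * n + 2) := by
  have hf : Q.polarBilin.flip y ≠ 0 := fun h ↦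
    hy (hQ.separatingRight y fun x ↦ LinearMap.congr_fun h x)
  rw [← hQ.card_space, ← hQ.card_field]
  exact card_mul_card_linearMap_ne_zero hf

theorem card_isotropic_polar_ne_zero_of_isotropic (hQ : IsEllipticForm Q q n) (hy : y ≠ 0)
    (hQy : Q y = 0) :
    #{x | Q x = 0 ∧ polar Q x y ≠ 0} = q ^ (2 * n) * (q - 1) := by
  have hlines := card_mul_card_isotropic_polar_ne_zero_add_sum Q y
  simp only [hQy, mul_zero, sum_const, card_univ, smul_eq_mul, hQ.card_field,
    Nat.add_right_cancel_iff] at hlines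
  have hpolar := hQ.mul_card_polar_ne_zero hy
  rw [← hlines] at hpolar
  refine mul_left_cancel₀ (pow_ne_zero 2 hQ.one_lt.ne_bot) ?_
  linear_combination hpolar

theorem card_isotropic_polar_ne_zero_of_anisotropic (hQ : IsEllipticForm Q q n) (hQy : Q y ≠ 0) :
    #{x | Q x = 0 ∧ polar Q x y ≠ 0} = q ^ n * ((q - 1) * (q ^ n - 1)) := by
  have hq := hQ.one_lt
  have hy : y ≠ 0 := fun h ↦ hQy (h ▸ Q.map_zero)
  have hsum : ∑ s : F, #{x | Q x = s * s * Q y} = q ^ (2 * n + 2) := by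
    have hfiber (s : F) (hs : s ∈ univ.erase 0) :
        #{x | Q x = s * s * Q y} = q ^ n * (q ^ (n + 1) + 1) :=
      have hs0 : s ≠ 0 := ne_of_mem_erase hs
      hQ.card_fiber _ (mul_ne_zero (mul_ne_zero hs0 hs0) hQy)
    rw [← hQ.card_isotropic_add, ← add_sum_erase _ _ (mem_univ 0), sum_congr rfl hfiber, sum_const,
      card_erase_of_mem (mem_univ _), card_univ, hQ.card_field, smul_eq_mul]
    simp only [mul_zero, zero_mul]
  have hlines := card_mul_card_isotropic_polar_ne_zero_add_sum Q y
  rw [hsum, hQ.card_field] at hlines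
  have hpolar := hQ.mul_card_polar_ne_zero hy
  have hadd := hQ.card_isotropic_add
  refine mul_left_cancel₀ (pow_ne_zero 2 hq.ne_bot) ?_
  zify [hq.le, Nat.one_le_pow n q hq.pos] at hlines hpolar hadd ⊢
  linear_combination (q : ℤ) * hlines + hpolar + (q : ℤ) ^ 2 * hadd

theorem card_isotropic_polar_eq_of_isotropic (hQ : IsEllipticForm Q q n) (hy : y ≠ 0)
    (hQy : Q y = 0) {c : F} (hc : c ≠ 0) :
    #{x | Q x = 0 ∧ polar Q x y = c} = q ^ (2 * n) := by
  refine mul_left_cancel₀ (Nat.sub_ne_zero_of_lt hQ.one_lt) ?_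
  calc (q - 1) * #{x | Q x = 0 ∧ polar Q x y = c}
      = #{x | Q x = 0 ∧ polar Q x y ≠ 0} :=
        hQ.card_field ▸ card_sub_one_mul_card_isotropic_eq Q (Q.polarBilin.flip y) hc
    _ = (q - 1) * q ^ (2 * n) := by
        rw [hQ.card_isotropic_polar_ne_zero_of_isotropic hy hQy, mul_comm]

theorem card_isotropic_polar_eq_of_anisotropic (hQ : IsEllipticForm Q q n) (hQy : Q y ≠ 0)
    {c : F} (hc : c ≠ 0) :
    #{x | Q x = 0 ∧ polar Q x y = c} = q ^ n * (q ^ n - 1) := by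
  refine mul_left_cancel₀ (Nat.sub_ne_zero_of_lt hQ.one_lt) ?_
  calc (q - 1) * #{x | Q x = 0 ∧ polar Q x y = c}
      = #{x | Q x = 0 ∧ polar Q x y ≠ 0} :=
        hQ.card_field ▸ card_sub_one_mul_card_isotropic_eq Q (Q.polarBilin.flip y) hc
    _ = (q - 1) * (q ^ n * (q ^ n - 1)) := by
        rw [hQ.card_isotropic_polar_ne_zero_of_anisotropic hQy, mul_left_comm]

theorem hammingNorm_of_isotropic (hQ : IsEllipticForm Q q n) (hy : y ≠ 0) (hQy : Q y = 0)
    {c : F} (hc : c ≠ 0) :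
    hammingNorm (quadricEncoder Q (y, c)) = q ^ n * ((q - 1) * (q ^ n - 1)) := by
  have hsplit := hammingNorm_quadricEncoder_add_card Q y c
  have hadd := hQ.card_isotropic_add
  rw [hQ.card_isotropic_polar_eq_of_isotropic hy hQy (neg_ne_zero.2 hc)] at hsplit
  have hq := hQ.one_lt
  zify [hq.le, Nat.one_le_pow n q hq.pos] at hsplit hadd ⊢
  linear_combination hsplit + hadd

theorem hammingNorm_of_anisotropic (hQ : IsEllipticForm Q q n) (hQy : Q y ≠ 0)
    {c : F} (hc : c ≠ 0) :
    hammingNorm (quadricEncoder Q (y, c)) = q ^ n * ((q - 1) * (q ^ n - 1) + 1) := by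
  have hsplit := hammingNorm_quadricEncoder_add_card Q y c
  have hadd := hQ.card_isotropic_add
  rw [hQ.card_isotropic_polar_eq_of_anisotropic hQy (neg_ne_zero.2 hc)] at hsplit
  have hq := hQ.one_lt
  zify [hq.le, Nat.one_le_pow n q hq.pos] at hsplit hadd ⊢
  linear_combination hsplit + hadd

theorem hammingNorm_zero_right_of_isotropic (hQ : IsEllipticForm Q q n) (hy : y ≠ 0)
    (hQy : Q y = 0) : hammingNorm (quadricEncoder Q (y, 0)) = q ^ (2 * n) * (q - 1) := by
  rw [hammingNorm_quadricEncoder_zero_right, hQ.card_isotropic_polar_ne_zero_of_isotropic hy hQy]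

theorem hammingNorm_zero_right_of_anisotropic (hQ : IsEllipticForm Q q n) (hQy : Q y ≠ 0) :
    hammingNorm (quadricEncoder Q (y, 0)) = q ^ n * ((q - 1) * (q ^ n - 1)) := by
  rw [hammingNorm_quadricEncoder_zero_right, hQ.card_isotropic_polar_ne_zero_of_anisotropic hQy]

theorem hammingNorm_zero_left (hQ : IsEllipticForm Q q n) {c : F} (hc : c ≠ 0) :
    hammingNorm (quadricEncoder Q (0, c)) = q ^ n * (q ^ (n + 1) - q + 1) := by
  rw [hammingNorm_quadricEncoder_zero_left Q hc, hQ.card_isotropic]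

theorem le_hammingNorm (hQ : IsEllipticForm Q q n) {z : V × F} (hz : z ≠ 0) :
    q ^ n * ((q - 1) * (q ^ n - 1)) ≤ hammingNorm (quadricEncoder Q z) := by
  obtain ⟨y, c⟩ := z
  by_cases hQy : Q y = 0
  · by_cases hc : c = 0
    · have hy : y ≠ 0 := fun hy ↦ hz (Prod.ext hy hc)
      rw [hc, hQ.hammingNorm_zero_right_of_isotropic hy hQy, two_mul, pow_add, mul_assoc,
        mul_comm (q - 1)]
      gcongr
      exact Nat.sub_le _ _
    by_cases hy : y = 0
    · rw [hy, hQ.hammingNorm_zero_left hc]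
      have hq := hQ.one_lt
      have hqq : q ≤ q ^ (n + 1) := Nat.le_self_pow n.succ_ne_zero q
      gcongr
      zify [hq.le, hqq, Nat.one_le_pow n q hq.pos]
      linear_combination pow_nonneg (Int.natCast_nonneg q) n
    · exact (hQ.hammingNorm_of_isotropic hy hQy hc).ge
  · by_cases hc : c = 0
    · rw [hc, hQ.hammingNorm_zero_right_of_anisotropic hQy]
    · rw [hQ.hammingNorm_of_anisotropic hQy hc]
      gcongr
      exact Nat.le_succ _

theorem quadricEncoder_injective (hQ : IsEllipticForm Q q n) (hn : n ≠ 0) :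
    Function.Injective (quadricEncoder Q) := by
  refine (injective_iff_map_eq_zero _).2 fun z hz ↦ of_not_not fun hne ↦ ?_
  have hpos : 0 < q ^ n * ((q - 1) * (q ^ n - 1)) :=
    Nat.mul_pos (Nat.pow_pos (Nat.zero_lt_of_lt hQ.one_lt))
      (Nat.mul_pos (Nat.sub_pos_of_lt hQ.one_lt) (Nat.sub_pos_of_lt (Nat.one_lt_pow hn hQ.one_lt)))
  exact (hpos.trans_le (hQ.le_hammingNorm hne)).ne' (hammingNorm_eq_zero.2 hz)

theorem isMinDist_range_quadricEncoder (hQ : IsEllipticForm Q q n) (hn : n ≠ 0) :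
    IsMinDist (Set.range (quadricEncoder Q)) (q ^ n * (q ^ (n + 1) - q ^ n - q + 1)) := by
  rw [pow_succ_sub_pow_sub_add_one hQ.one_lt hn]
  have hinj := hQ.quadricEncoder_injective hn
  constructor
  · have hfiber : 0 < #{x | Q x = 1} := by
      rw [hQ.card_fiber 1 one_ne_zero]
      exact Nat.mul_pos (Nat.pow_pos (Nat.zero_lt_of_lt hQ.one_lt)) (Nat.succ_pos _)
    obtain ⟨y, hy⟩ := card_pos.1 hfiber
    have hQy : Q y ≠ 0 := by simp_all
    have hy0 : (y, (0 : F)) ≠ 0 := fun h ↦ hQy ((congrArg (Q ·.1) h).trans Q.map_zero)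
    exact ⟨_, ⟨(y, 0), rfl⟩, (map_ne_zero_iff _ hinj).2 hy0,
      hQ.hammingNorm_zero_right_of_anisotropic hQy⟩
  · rintro _ ⟨z, rfl⟩ hz
    exact hQ.le_hammingNorm ((map_ne_zero_iff _ hinj).1 hz)

theorem card_range_quadricEncoder (hQ : IsEllipticForm Q q n) (hn : n ≠ 0) :
    Nat.card (Set.range (quadricEncoder Q)) = q ^ (2 * n + 3) := by
  rw [Nat.card_range_of_injective (hQ.quadricEncoder_injective hn), Nat.card_prod,
    Nat.card_eq_fintype_card, Nat.card_eq_fintype_card, hQ.card_space, hQ.card_field, ← pow_succ]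

theorem map_hammingNorm_quadricEncoder (hQ : IsEllipticForm Q q n) :
    univ.val.map (fun z ↦ hammingNorm (quadricEncoder Q z))
      = Multiset.replicate 1 0
        + Multiset.replicate ((q ^ n * (q ^ (n + 1) - q + 1) - 1) * (q - 1)
            + (q - 1) * (q ^ n * (q ^ (n + 1) + 1))) (q ^ n * ((q - 1) * (q ^ n - 1)))
        + Multiset.replicate ((q - 1) * (q ^ n * (q ^ (n + 1) + 1)) * (q - 1))
            (q ^ n * ((q - 1) * (q ^ n - 1) + 1))
        + Multiset.replicate (q ^ n * (q ^ (n + 1) - q + 1) - 1) (q ^ (2 * n) * (q - 1))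
        + Multiset.replicate (q - 1) (q ^ n * (q ^ (n + 1) - q + 1)) := by
  have hF : (univ : Finset F).val = ({0} : Finset F).val + (univ.erase (0 : F)).val := by
    rw [erase_val, singleton_val, Multiset.singleton_add, Multiset.cons_erase (mem_univ _)]
  have hV := univ_val_eq_singleton_add (P := fun x ↦ Q x = 0) Q.map_zero
  have hcardF : #(univ.erase (0 : F)) = q - 1 := by
    rw [card_erase_of_mem (mem_univ _), card_univ, hQ.card_field]
  have hcardI : #(({x | Q x = 0} : Finset V).erase 0) = q ^ n * (q ^ (n + 1) - q + 1) - 1 := by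
    rw [card_erase_of_mem (by simp), hQ.card_isotropic]
  have hI {y : V} (hy : y ∈ ({x | Q x = 0} : Finset V).erase 0) : y ≠ 0 ∧ Q y = 0 := by
    simpa using hy
  have hA {y : V} (hy : y ∈ ({x | Q x ≠ 0} : Finset V)) : Q y ≠ 0 := by simpa using hy
  rw [← univ_product_univ, product_val, hF, hV, ← singleton_val]
  simp only [Multiset.add_product, Multiset.product_add, Multiset.map_add]
  have hzero (y : V) (hy : y ∈ ({0} : Finset V)) (c : F) (hc : c ∈ ({0} : Finset F)) :
      hammingNorm (quadricEncoder Q (y, c)) = 0 := by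
    rw [mem_singleton.1 hy, mem_singleton.1 hc, Prod.mk_zero_zero, map_zero, hammingNorm_zero]
  rw [map_product_eq_replicate hzero,
    map_product_eq_replicate (s := {0}) (t := univ.erase 0) fun y hy c hc ↦ by
      rw [mem_singleton.1 hy, hQ.hammingNorm_zero_left (ne_of_mem_erase hc)],
    map_product_eq_replicate (t := {0}) fun y hy c hc ↦ by
      rw [mem_singleton.1 hc, hQ.hammingNorm_zero_right_of_isotropic (hI hy).1 (hI hy).2],
    map_product_eq_replicate (t := univ.erase 0) fun y hy c hc ↦
      hQ.hammingNorm_of_isotropic (hI hy).1 (hI hy).2 (ne_of_mem_erase hc),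
    map_product_eq_replicate (t := {0}) fun y hy c hc ↦ by
      rw [mem_singleton.1 hc, hQ.hammingNorm_zero_right_of_anisotropic (hA hy)],
    map_product_eq_replicate (t := univ.erase 0) fun y hy c hc ↦
      hQ.hammingNorm_of_anisotropic (hA hy) (ne_of_mem_erase hc)]
  simp only [hcardF, hcardI, hQ.card_anisotropic, card_singleton, mul_one, one_mul,
    Multiset.replicate_add]
  abel

theorem map_hammingNorm_toFinset (hQ : IsEllipticForm Q q n) (hn : n ≠ 0)
    {C : Set ({x : V // Q x = 0} → F)} (hC : C = Set.range (quadricEncoder Q)) :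
    (C.toFinset.val.map fun c ↦ hammingNorm c)
      = Multiset.replicate 1 0
        + Multiset.replicate
            (q ^ n * (2 * q ^ (n + 2) - 2 * q ^ (n + 1) - q ^ 2 + 3 * q - 2) - q + 1)
            (q ^ n * (q ^ (n + 1) - q ^ n - q + 1))
        + Multiset.replicate (q ^ n * (q - 1) * (q ^ (n + 2) - q ^ (n + 1) + q - 1))
            (q ^ n * (q ^ (n + 1) - q ^ n - q + 2))
        + Multiset.replicate (q ^ n * (q ^ (n + 1) - q + 1) - 1) (q ^ (2 * n) * (q - 1))
        + Multiset.replicate (q - 1) (q ^ n * (q ^ (n + 1) - q + 1)) := by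
  rw [map_toFinset_val_eq (hQ.quadricEncoder_injective hn) hC, hQ.map_hammingNorm_quadricEncoder,
    ← pow_succ_sub_pow_sub_add_one hQ.one_lt hn, ← pow_mul_sub_one_mul_pow_sub hQ.one_lt,
    ← pow_mul_two_mul_pow_sub hQ.one_lt]

end IsEllipticForm

end QuadraticForm

section NormForm

open Finset Module
open QuadraticMap (polar)

variable (F : Type*) {K L : Type*} [Field F] [Field K] [Field L] [Fintype K] [Finite L]
  [Algebra F K] [Algebra K L] [Algebra F L] [IsScalarTower F K L]

local notation "σ" => FiniteField.frobeniusAlgEquivOfAlgebraic K L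

theorem frobeniusAlgEquivOfAlgebraic_apply_apply (h : finrank K L = 2) (x : L) : σ (σ x) = x := by
  have := Fintype.ofFinite L
  simp only [FiniteField.coe_frobeniusAlgEquivOfAlgebraic]
  rw [← pow_mul, ← sq, ← h, ← card_eq_pow_finrank, FiniteField.pow_card]

theorem algebraMap_norm_eq_mul_frobenius (h : finrank K L = 2) (x : L) :
    algebraMap K L (Algebra.norm K x) = x * σ x := by
  rw [FiniteField.algebraMap_norm_eq_prod_pow, h, prod_range_succ, prod_range_one,
    Nat.card_eq_fintype_card, pow_zero, pow_one, pow_one,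
    FiniteField.coe_frobeniusAlgEquivOfAlgebraic]

theorem algebraMap_trace_eq_add_frobenius (h : finrank K L = 2) (x : L) :
    algebraMap K L (Algebra.trace K L x) = x + σ x := by
  rw [FiniteField.algebraMap_trace_eq_sum_pow, h, sum_range_succ, sum_range_one,
    Nat.card_eq_fintype_card, pow_zero, pow_one, pow_one,
    FiniteField.coe_frobeniusAlgEquivOfAlgebraic]

theorem polar_norm (h : finrank K L = 2) (x y : L) :
    polar (Algebra.norm K) x y = Algebra.trace K L (x * σ y) := by
  apply (algebraMap K L).injective
  simp only [polar, map_sub, algebraMap_norm_eq_mul_frobenius h,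
    algebraMap_trace_eq_add_frobenius h, map_add, map_mul,
    frobeniusAlgEquivOfAlgebraic_apply_apply h]
  ring

/-- The norm of a quadratic extension of finite fields, as a quadratic form. -/
def normForm (h : finrank K L = 2) : QuadraticForm K L :=
  QuadraticMap.ofPolar (Algebra.norm K)
    (fun a x ↦ by rw [Algebra.smul_def, map_mul, Algebra.norm_algebraMap, h, sq, smul_eq_mul])
    (fun x x' y ↦ by simp only [polar_norm h, add_mul, map_add])
    (fun a x y ↦ by simp only [polar_norm h, smul_mul_assoc, map_smul])

/-- The quadratic form `x ↦ Tr (N x)` over `F`, for a tower `L / K / F` of finite fields with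
`L / K` quadratic, where `N` is the norm of `L / K` and `Tr` is the trace of `K / F`. -/
def traceNormForm (h : finrank K L = 2) : QuadraticForm F L :=
  (Algebra.trace F K).compQuadraticMap' (normForm h)

theorem traceNormForm_apply (h : finrank K L = 2) (x : L) :
    traceNormForm F h x = Algebra.trace F K (Algebra.norm K x) := rfl

theorem polar_traceNormForm (h : finrank K L = 2) (x y : L) :
    polar (traceNormForm F h) x y = Algebra.trace F L (x * σ y) := by
  rw [← Algebra.trace_trace (S := K), ← polar_norm h]
  simp only [polar, traceNormForm_apply, map_sub]

theorem separatingRight_polarBilin_traceNormForm (h : finrank K L = 2) :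
    (traceNormForm F h).polarBilin.SeparatingRight := by
  intro y hy
  have hσ : σ y = 0 := (traceForm_nondegenerate F L).2 _ fun x ↦
    (polar_traceNormForm F h x y).symm.trans (hy x)
  exact (map_eq_zero_iff _ (AlgEquiv.injective σ)).1 hσ

theorem augCode_traceNormForm_eq_range (h : finrank K L = 2) :
    augCode F L (fun x ↦ traceNormForm F h x = 0)
      = Set.range (quadricEncoder (traceNormForm F h)) := by
  ext w
  constructor
  · rintro ⟨b, c, hw⟩
    refine ⟨(AlgEquiv.symm σ b, c), funext fun d ↦ ?_⟩
    rw [hw, quadricEncoder_apply, polar_traceNormForm, AlgEquiv.apply_symm_apply, mul_comm]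
  · rintro ⟨⟨y, c⟩, rfl⟩
    refine ⟨σ y, c, fun d ↦ ?_⟩
    rw [quadricEncoder_apply, polar_traceNormForm, mul_comm]

end NormForm

section NormFormCount

open Finset Module

variable {F K L : Type*} [Field F] [Field K] [Field L] [Fintype K] [Fintype L] [Algebra F K]
  [Algebra K L] [Algebra F L] [IsScalarTower F K L]

theorem card_norm_fiber (h : finrank K L = 2) {z : K} (hz : z ≠ 0) :
    #{x : L | Algebra.norm K x = z} = Fintype.card K + 1 := by
  have hunits := card_mul_card_fiber_monoidHom (FiniteField.unitsMap_norm_surjective K L)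
    (Units.mk0 z hz)
  have hval : #{u : Lˣ | Units.map (Algebra.norm K) u = Units.mk0 z hz}
      = #{x : L | Algebra.norm K x = z} := by
    refine card_bij (fun u _ ↦ u.1) (fun u hu ↦ ?_) (fun u _ v _ h ↦ Units.ext h) fun x hx ↦ ?_
    · simpa [Units.ext_iff] using hu
    · have hx0 : x ≠ 0 := by rintro rfl; exact hz (by simpa [eq_comm] using hx)
      exact ⟨Units.mk0 x hx0, by simpa [Units.ext_iff] using hx, rfl⟩
  have hK : 0 < Fintype.card K - 1 := Nat.sub_pos_of_lt Fintype.one_lt_card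
  rw [← hval]
  refine Nat.eq_of_mul_eq_mul_left hK ?_
  rw [← Fintype.card_units, hunits, Fintype.card_units,
    card_eq_pow_finrank (K := K) (V := L), h, mul_comm,
    Fintype.card_units]
  exact Nat.sq_sub_sq _ 1

theorem card_trace_fiber [Fintype F] (a : F) :
    Fintype.card F * #{z : K | Algebra.trace F K z = a} = Fintype.card K :=
  card_mul_card_fiber_addMonoidHom (f := (Algebra.trace F K).toAddMonoidHom)
    (Algebra.trace_surjective F K) a

theorem card_traceNormForm_fiber (h : finrank K L = 2) {a : F} (ha : a ≠ 0) :
    #{x | traceNormForm F h x = a}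
      = #{z : K | Algebra.trace F K z = a} * (Fintype.card K + 1) := by
  calc #{x | traceNormForm F h x = a}
      = ∑ z : K with Algebra.trace F K z = a, #{x : L | Algebra.norm K x = z} := by
        rw [sum_card_fiberwise_eq_card_filter _ _ (Algebra.norm K)]
        exact congrArg card (filter_congr fun x _ ↦ by rw [mem_filter_univ, traceNormForm_apply])
    _ = #{z : K | Algebra.trace F K z = a} * (Fintype.card K + 1) := by
        refine sum_const_nat fun z hz ↦ card_norm_fiber h ?_
        rintro rfl
        simp_all

theorem isEllipticForm_traceNormForm [Fintype F] (h : finrank K L = 2) {q n : ℕ}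
    (hF : Fintype.card F = q) (hK : Fintype.card K = q ^ (n + 1)) :
    IsEllipticForm (traceNormForm F h) q n where
  card_field := hF
  card_space := by rw [card_eq_pow_finrank (K := K), h, hK, ← pow_mul, add_one_mul, mul_comm]
  separatingRight := separatingRight_polarBilin_traceNormForm F h
  card_fiber a ha := by
    have hq : q ≠ 0 := hF ▸ Fintype.card_ne_zero
    have htrace := card_trace_fiber (F := F) (K := K) a
    rw [hF, hK, pow_succ'] at htrace
    rw [card_traceNormForm_fiber h ha, Nat.eq_of_mul_eq_mul_left (Nat.pos_of_ne_zero hq) htrace,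
      hK]

end NormFormCount

theorem stmt3 (p a q r m : ℕ) (hp : p.Prime) (ha : 0 < a) (hqpa : q = p ^ a)
    (hr : 2 ≤ r) (hm : m = 2 * r)
    (Fq Fr Fm : Type) [Field Fq] [Field Fr] [Field Fm]
    [Fintype Fq] [Fintype Fr] [Fintype Fm]
    [Algebra Fq Fr] [Algebra Fr Fm] [Algebra Fq Fm] [IsScalarTower Fq Fr Fm]
    (hcq : Fintype.card Fq = q) (hcr : Fintype.card Fr = q ^ r)
    (hcm : Fintype.card Fm = q ^ m)
    (g : Fm → Fr) (hg : ∀ x : Fm, algebraMap Fr Fm (g x) = x ^ (q ^ r + 1))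
    (C : Set ({x : Fm // Algebra.trace Fq Fr (g x) = 0} → Fq))
    (hC : C = augCode Fq Fm (fun x => Algebra.trace Fq Fr (g x) = 0)) :
    -- length
    Fintype.card {x : Fm // Algebra.trace Fq Fr (g x) = 0}
        = q ^ (r - 1) * (q ^ r - q + 1) ∧
    -- dimension `m + 1`
    Nat.card C = q ^ (m + 1) ∧
    -- minimum distance
    IsMinDist C (q ^ (r - 1) * (q ^ r - q ^ (r - 1) - q + 1)) ∧
    -- weight distribution as a multiset
    (C.toFinset.val.map fun c => hammingNorm c)
      = Multiset.replicate 1 0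
        + Multiset.replicate
            (q ^ (r - 1) * (2 * q ^ (r + 1) - 2 * q ^ r - q ^ 2 + 3 * q - 2) - q + 1)
            (q ^ (r - 1) * (q ^ r - q ^ (r - 1) - q + 1))
        + Multiset.replicate (q ^ (r - 1) * (q - 1) * (q ^ (r + 1) - q ^ r + q - 1))
            (q ^ (r - 1) * (q ^ r - q ^ (r - 1) - q + 2))
        + Multiset.replicate (q ^ (r - 1) * (q ^ r - q + 1) - 1)
            (q ^ (2 * r - 2) * (q - 1))
        + Multiset.replicate (q - 1) (q ^ (r - 1) * (q ^ r - q + 1)) := by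
  obtain ⟨n, rfl⟩ : ∃ n, r = n + 1 := ⟨r - 1, by omega⟩
  have hn : n ≠ 0 := by omega
  have hfin : Module.finrank Fr Fm = 2 := by
    have hcard := Module.card_eq_pow_finrank (K := Fr) (V := Fm)
    rw [hcm, hcr, hm, mul_comm, pow_mul] at hcard
    exact (Nat.pow_right_injective (hcr ▸ Fintype.one_lt_card) hcard).symm
  have hQ := isEllipticForm_traceNormForm (F := Fq) hfin hcq hcr
  have hg' : g = Algebra.norm Fr := funext fun x ↦ (algebraMap Fr Fm).injective <| by
    rw [hg, algebraMap_norm_eq_mul_frobenius hfin, FiniteField.coe_frobeniusAlgEquivOfAlgebraic,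
      hcr, pow_succ']
  subst hg' hm
  have hrange : C = Set.range (quadricEncoder (traceNormForm Fq hfin)) :=
    hC.trans (augCode_traceNormForm_eq_range Fq hfin)
  exact ⟨(Fintype.card_subtype _).trans hQ.card_isotropic,
    hrange ▸ hQ.card_range_quadricEncoder hn,
    hrange ▸ hQ.isMinDist_range_quadricEncoder hn,
    hQ.map_hammingNorm_toFinset hn hrange⟩
end
end

section
/- Let q be a prime power and m = 2r with r ≥ 2 and (q, r) ≠ (2, 2). Then the augmented code \overline{C_D} is self-orthogonal, i.e., \overline{C_D} ⊆ \overline{C_D}^⊥; equivalently, the standard inner product of any two codewords of \overline{C_D} is zero. -/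
open scoped Classical

noncomputable section

/-- The dual code under the standard inner product. -/
def dualCode {ι F : Type*} [Fintype ι] [CommRing F] (C : Set (ι → F)) : Set (ι → F) :=
  {u | ∀ v ∈ C, ∑ i, u i * v i = 0}

/-!
If `Q` is a quadratic form over `F` with `|F| = q`, then `1 - Q ^ (q - 1)` is the indicator function
of the zeros of `Q`. The inner product of two codewords is the sum over these zeros of a product of
two affine functions, so it is the sum over the whole space of a polynomial function of degree at
most `2 (q - 1) + 2 = 2 q`. As in the Chevalley–Warning theorem, such a sum vanishes when
`2 q < (q - 1) n`, where `n` is the dimension. For `Q x = Tr (x ^ (q ^ r + 1))` one has `n = 2 r`,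
and the inequality fails exactly when `q = r = 2`, given `r ≥ 2`.
-/

section PolynomialRepresentation

open MvPolynomial Module

variable {R ι V : Type*} [CommRing R] [Finite ι] [AddCommGroup V] [Module R V]

theorem exists_totalDegree_le_one_eval_eq_affineMap (b : Basis ι R V) (f : V →ᵃ[R] R) :
    ∃ p : MvPolynomial ι R, p.totalDegree ≤ 1 ∧ ∀ x, eval (b.repr x) p = f x := by
  have := Fintype.ofFinite ι
  let b₁ := Basis.singleton Unit R
  refine ⟨f.linear.toMvPolynomial b b₁ () + C (f 0), ?_, fun x => ?_⟩
  · refine (totalDegree_add _ _).trans (max_le ?_ ?_)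
    · exact f.linear.toMvPolynomial_totalDegree_le b b₁ ()
    · simp only [totalDegree_C, zero_le]
  · rw [map_add, eval_C, LinearMap.toMvPolynomial_eval_eq_apply, b.repr.symm_apply_apply,
      Basis.singleton_repr, congrFun f.decomp x, Pi.add_apply]

theorem exists_totalDegree_le_two_eval_eq_quadraticForm (b : Basis ι R V) (Q : QuadraticForm R V) :
    ∃ p : MvPolynomial ι R, p.totalDegree ≤ 2 ∧ ∀ x, eval (b.repr x) p = Q x := by
  have := Fintype.ofFinite ι
  have := Free.of_basis b
  obtain ⟨B, rfl⟩ := LinearMap.BilinMap.toQuadraticMap_surjective Q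
  let b₁ := Basis.singleton Unit R
  refine ⟨∑ i, X i * (B (b i)).toMvPolynomial b b₁ (), ?_, fun x => ?_⟩
  · refine totalDegree_finsetSum_le fun i _ => (totalDegree_mul _ _).trans ?_
    exact add_le_add (isHomogeneous_X R i).totalDegree_le
      ((B (b i)).toMvPolynomial_totalDegree_le b b₁ ())
  · calc
      eval (b.repr x) (∑ i, X i * (B (b i)).toMvPolynomial b b₁ ())
          = ∑ i, b.repr x i * B (b i) x := by
        simp only [map_sum, map_mul, eval_X, LinearMap.toMvPolynomial_eval_eq_apply,
          b.repr.symm_apply_apply, b₁, Basis.singleton_repr]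
      _ = B (∑ i, b.repr x i • b i) x := by
        simp only [LinearMap.map_sum₂, LinearMap.map_smul₂, smul_eq_mul]
      _ = B.toQuadraticMap x := by rw [b.sum_repr, LinearMap.BilinMap.toQuadraticMap_apply]

end PolynomialRepresentation

section ChevalleyWarning

open MvPolynomial Module

variable {F : Type*} [Field F] [Fintype F]

theorem sum_eval_zeros_eq_zero {σ : Type*} [Fintype σ] [DecidableEq σ] {Q f : MvPolynomial σ F}
    (hdeg : (Fintype.card F - 1) * Q.totalDegree + f.totalDegree <
      (Fintype.card F - 1) * Fintype.card σ) :
    ∑ v with eval v Q = 0, eval v f = 0 := by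
  have hdeg_prod : ((1 - Q ^ (Fintype.card F - 1)) * f).totalDegree <
      (Fintype.card F - 1) * Fintype.card σ := by
    refine lt_of_le_of_lt ((totalDegree_mul _ _).trans ?_) hdeg
    gcongr
    refine (totalDegree_sub _ _).trans (max_le ?_ (totalDegree_pow _ _))
    simp only [totalDegree_one, zero_le]
  have hindicator (a : F) : 1 - a ^ (Fintype.card F - 1) = if a = 0 then 1 else 0 := by
    split_ifs with ha
    · rw [ha, zero_pow (Nat.sub_ne_zero_of_lt Fintype.one_lt_card), sub_zero]
    · rw [FiniteField.pow_card_sub_one_eq_one a ha, sub_self]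
  rw [Finset.sum_filter]
  refine (Finset.sum_congr rfl fun v _ => ?_).trans (sum_eval_eq_zero _ hdeg_prod)
  simp only [map_mul, map_sub, map_one, map_pow, hindicator, ite_mul, one_mul, zero_mul]

theorem sum_affineMap_mul_affineMap_zeros_eq_zero {V : Type*} [AddCommGroup V] [Module F V]
    [Fintype V] (Q : QuadraticForm F V) (f g : V →ᵃ[F] F)
    (hcard : 2 * Fintype.card F < (Fintype.card F - 1) * finrank F V) :
    ∑ x with Q x = 0, f x * g x = 0 := by
  let b := finBasis F V
  obtain ⟨pQ, hQdeg, hQ⟩ := exists_totalDegree_le_two_eval_eq_quadraticForm b Q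
  obtain ⟨pf, hfdeg, hf⟩ := exists_totalDegree_le_one_eval_eq_affineMap b f
  obtain ⟨pg, hgdeg, hg⟩ := exists_totalDegree_le_one_eval_eq_affineMap b g
  have hdeg : (Fintype.card F - 1) * pQ.totalDegree + (pf * pg).totalDegree <
      (Fintype.card F - 1) * Fintype.card (Fin (finrank F V)) := by
    have hq : 1 < Fintype.card F := Fintype.one_lt_card
    calc
      (Fintype.card F - 1) * pQ.totalDegree + (pf * pg).totalDegree
          ≤ (Fintype.card F - 1) * 2 + (1 + 1) := by
        gcongr
        exact (totalDegree_mul pf pg).trans (add_le_add hfdeg hgdeg)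
      _ = 2 * Fintype.card F := by lia
      _ < (Fintype.card F - 1) * Fintype.card (Fin (finrank F V)) := by rwa [Fintype.card_fin]
  calc
    ∑ x with Q x = 0, f x * g x = ∑ v with eval v pQ = 0, eval v (pf * pg) := by
      rw [Finset.sum_filter, Finset.sum_filter, ← b.equivFun.toEquiv.sum_comp]
      simp only [LinearEquiv.coe_toEquiv, b.equivFun_apply, map_mul, hQ, hf, hg]
    _ = 0 := sum_eval_zeros_eq_zero hdeg

end ChevalleyWarning

theorem exists_quadraticMap_eq_of_injective {F V W M : Type*} [Field F] [AddCommGroup V]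
    [AddCommGroup W] [AddCommMonoid M] [Module F V] [Module F W] [Module F M]
    {i : W →ₗ[F] V} (hi : Function.Injective i) (Q : QuadraticMap F M V) {g : M → W}
    (hg : ∀ x, i (g x) = Q x) :
    ∃ Q' : QuadraticMap F M W, ⇑Q' = g := by
  obtain ⟨s, hs⟩ := i.exists_leftInverse_of_injective (LinearMap.ker_eq_bot.2 hi)
  refine ⟨s.compQuadraticMap Q, funext fun x => ?_⟩
  rw [LinearMap.compQuadraticMap_apply, ← hg, ← LinearMap.comp_apply, hs, LinearMap.id_apply]

theorem exists_quadraticForm_eq_trace_pow_card_add_one {F E K : Type*} [Field F] [Field E]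
    [Fintype E] [CommRing K] [Nontrivial K] [Algebra F E] [Algebra E K] [Algebra F K]
    [IsScalarTower F E K] {g : K → E}
    (hg : ∀ x, algebraMap E K (g x) = x ^ (Fintype.card E + 1)) :
    ∃ Q : QuadraticForm F K, ⇑Q = fun x => Algebra.trace F E (g x) := by
  let frob : K →ₗ[F] K := (FiniteField.frobeniusAlgHom E K).toLinearMap.restrictScalars F
  obtain ⟨N, rfl⟩ := exists_quadraticMap_eq_of_injective
    (i := (IsScalarTower.toAlgHom F E K).toLinearMap) (algebraMap E K).injective
    (QuadraticMap.linMulLin frob LinearMap.id) (g := g) fun x => (hg x).trans (pow_succ _ _)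
  exact ⟨(Algebra.trace F E).compQuadraticMap N, rfl⟩

theorem finrank_eq_of_card_eq_pow {F V : Type*} [Field F] [Fintype F] [AddCommGroup V] [Fintype V]
    [Module F V] {n : ℕ} (h : Fintype.card V = Fintype.card F ^ n) : Module.finrank F V = n :=
  Nat.pow_right_injective Fintype.one_lt_card (Module.card_eq_pow_finrank.symm.trans h)

theorem two_mul_lt_sub_one_mul_two_mul {q r : ℕ} (hq : 2 ≤ q) (hr : 2 ≤ r)
    (hqr : ¬(q = 2 ∧ r = 2)) : 2 * q < (q - 1) * (2 * r) := by
  obtain ⟨s, rfl⟩ := Nat.exists_eq_add_of_le hq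
  obtain ⟨t, rfl⟩ := Nat.exists_eq_add_of_le hr
  have hst : 0 < s + t := by lia
  calc
    2 * (2 + s) < 2 * (2 + s) + 2 * (s + t + s * t) := by lia
    _ = (2 + s - 1) * (2 * (2 + t)) := by
      rw [show 2 + s - 1 = 1 + s by lia]
      ring

theorem two_mul_card_lt_card_sub_one_mul_finrank {F V : Type*} [Field F] [Fintype F]
    [AddCommGroup V] [Fintype V] [Module F V] {r : ℕ}
    (hcard : Fintype.card V = Fintype.card F ^ (2 * r)) (hr : 2 ≤ r)
    (hqr : ¬(Fintype.card F = 2 ∧ r = 2)) :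
    2 * Fintype.card F < (Fintype.card F - 1) * Module.finrank F V := by
  rw [finrank_eq_of_card_eq_pow hcard]
  exact two_mul_lt_sub_one_mul_two_mul Fintype.one_lt_card hr hqr

theorem exists_affineMap_of_mem_augCode {F K : Type*} [Field F] [Field K] [Algebra F K]
    {P : K → Prop} {w : {x : K // P x} → F} (hw : w ∈ augCode F K P) :
    ∃ f : K →ᵃ[F] F, ∀ d, w d = f d.1 := by
  obtain ⟨b, c, hbc⟩ := hw
  let traceMul : K →ₗ[F] F := (Algebra.trace F K).comp (LinearMap.mulLeft F b)
  exact ⟨traceMul.toAffineMap + AffineMap.const F K c, hbc⟩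

theorem stmt6_general {F K : Type*} [Field F] [Fintype F] [Field K] [Fintype K] [Algebra F K]
    (Q : QuadraticForm F K)
    (hcard : 2 * Fintype.card F < (Fintype.card F - 1) * Module.finrank F K) :
    augCode F K (fun x => Q x = 0) ⊆ dualCode (augCode F K (fun x => Q x = 0)) := by
  intro u hu w hw
  obtain ⟨f, hf⟩ := exists_affineMap_of_mem_augCode hu
  obtain ⟨g, hg⟩ := exists_affineMap_of_mem_augCode hw
  calc
    ∑ d, u d * w d = ∑ d : {x : K // Q x = 0}, f d.1 * g d.1 := by simp only [hf, hg]
    _ = ∑ x with Q x = 0, f x * g x := by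
      rw [← Finset.sum_subtype_eq_sum_filter, Finset.subtype_univ]
    _ = 0 := sum_affineMap_mul_affineMap_zeros_eq_zero Q f g hcard

theorem stmt6 (p a q r m : ℕ) (hp : p.Prime) (ha : 0 < a) (hqpa : q = p ^ a)
    (hr : 2 ≤ r) (hm : m = 2 * r) (hqr : ¬(q = 2 ∧ r = 2))
    (Fq Fr Fm : Type) [Field Fq] [Field Fr] [Field Fm]
    [Fintype Fq] [Fintype Fr] [Fintype Fm]
    [Algebra Fq Fr] [Algebra Fr Fm] [Algebra Fq Fm] [IsScalarTower Fq Fr Fm]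
    (hcq : Fintype.card Fq = q) (hcr : Fintype.card Fr = q ^ r)
    (hcm : Fintype.card Fm = q ^ m)
    (g : Fm → Fr) (hg : ∀ x : Fm, algebraMap Fr Fm (g x) = x ^ (q ^ r + 1)) :
    augCode Fq Fm (fun x => Algebra.trace Fq Fr (g x) = 0)
      ⊆ dualCode (augCode Fq Fm (fun x => Algebra.trace Fq Fr (g x) = 0)) := by
  subst hm hcq
  obtain ⟨Q, hQ⟩ := exists_quadraticForm_eq_trace_pow_card_add_one (F := Fq) (hcr ▸ hg)
  have hcode := stmt6_general Q (two_mul_card_lt_card_sub_one_mul_finrank hcm hr hqr)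
  rwa [hQ] at hcode
end
end
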